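/- Let V be a real vector space, K ⊆ V a nonempty convex set, and o ∈ V a point outside the affine hull of K. Let ℓ ∈ ℕ, u = {1, …, ℓ}, and for each k ∈ u let f_k : P(K,o) → ℝ ∪ {+∞} be a generalized affine map and α_k ∈ ℝ; let s ⊆ u and P(K,o)_u^s = {x ∈ P(K,o) : f_k(x) ≤ α_k for all k ∈ u \ s, and f_k(x) = α_k for all k ∈ s}. Suppose K has no face of dimension belonging to {1, …, ℓ}. Then every extreme point of P(K,o)_u^s is a convex combination of one extreme point of K and the apex o; i.e., every extreme point x of P(K,o)_u^s satisfies x = o or x = (1−λ)σ + λo for some extreme point σ of K and some λ ∈ [0,1]. -/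

import Mathlib

variable {V : Type*} [AddCommGroup V] [Module ℝ V]

/-- `E` is an extreme subset of `K`: whenever a point of `E` is written as
`(1-l)•y + l•z` with `y, z ∈ K` and `l ∈ (0,1)`, both `y` and `z` lie in `E`. -/
def IsExtremeSubset (K E : Set V) : Prop :=
  E ⊆ K ∧ ∀ x ∈ E, ∀ y ∈ K, ∀ z ∈ K, ∀ l : ℝ, l ∈ Set.Ioo (0:ℝ) 1 →
    x = (1 - l) • y + l • z → y ∈ E ∧ z ∈ E

/-- `F` is a face of `K`: a convex extreme subset of `K`. -/
def IsFaceOf (K F : Set V) : Prop := Convex ℝ F ∧ IsExtremeSubset K F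

/-- The face of `K` generated by `x`: the smallest face of `K` containing `x`
(the intersection of all faces of `K` containing `x`). -/
def genFace (K : Set V) (x : V) : Set V := ⋂₀ {F | IsFaceOf K F ∧ x ∈ F}

/-- The relative algebraic interior of `C`: all `x ∈ C` such that for every
`y` in the affine hull of `C` there is `ε > 0` with `x ± ε(y - x) ∈ C`. -/
def riSet (C : Set V) : Set V :=
  {x | x ∈ C ∧ ∀ y ∈ affineSpan ℝ C, ∃ ε : ℝ, 0 < ε ∧
    x + ε • (y - x) ∈ C ∧ x - ε • (y - x) ∈ C}

/-- A generalized affine map on `K` with values in `ℝ ∪ {+∞}` (modelled by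
`EReal` values that are never `⊥` on `K`), affine with the extended arithmetic
`0·(+∞) = 0`, `λ·(+∞) = +∞` for `λ > 0`, `α + (+∞) = +∞`. -/
def IsGenAffine (K : Set V) (f : V → EReal) : Prop :=
  (∀ x ∈ K, f x ≠ ⊥) ∧
  ∀ x ∈ K, ∀ y ∈ K, ∀ l : ℝ, l ∈ Set.Icc (0:ℝ) 1 →
    f ((1 - l) • x + l • y) = ((1 - l : ℝ) : EReal) * f x + ((l : ℝ) : EReal) * f y

/-- `x` is an extreme point of `K`, i.e. `{x}` is an extreme subset of `K`. -/
def IsExtremePoint (K : Set V) (x : V) : Prop := IsExtremeSubset K {x}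

/-- The pyramid with apex `o` over `F`: the union of all closed segments
joining points of `F` with `o`; by convention `pyr ∅ o = {o}`. -/
def pyr (F : Set V) (o : V) : Set V := {o} ∪ ⋃ x ∈ F, segment ℝ x o

/-- The linear subspace of directions along which `σ` is in the relative interior of `K`. -/
def dirSub (K : Set V) (hK : Convex ℝ K) (σ : V) (hσ : σ ∈ K) : Submodule ℝ V where
  carrier := {v | ∃ ε : ℝ, 0 < ε ∧ σ + ε • v ∈ K ∧ σ - ε • v ∈ K}
  zero_mem' := ⟨1, one_pos, by simpa using hσ, by simpa using hσ⟩
  add_mem' := by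
    rintro v w ⟨a, ha, h1, h2⟩ ⟨b, hb, h3, h4⟩
    have hab : 0 < a + b := by positivity
    refine ⟨a * b / (a + b), by positivity, ?_, ?_⟩
    · have := hK h1 h3 (a := b / (a + b)) (b := a / (a + b)) (by positivity) (by positivity)
        (by field_simp; ring)
      convert this using 1
      match_scalars <;> field_simp <;> ring
    · have := hK h2 h4 (a := b / (a + b)) (b := a / (a + b)) (by positivity) (by positivity)
        (by field_simp; ring)
      convert this using 1
      match_scalars <;> field_simp <;> ring
  smul_mem' := by
    rintro c v ⟨a, ha, h1, h2⟩
    rcases lt_trichotomy c 0 with hc | rfl | hc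
    · have e : a / (-c) * c = -a := by
        have := hc.ne
        field_simp
      refine ⟨a / (-c), div_pos ha (by linarith), ?_, ?_⟩
      · rw [smul_smul, e]; simpa [sub_eq_add_neg] using h2
      · rw [smul_smul, e]; simpa [sub_eq_add_neg] using h1
    · exact ⟨1, one_pos, by simpa using hσ, by simpa using hσ⟩
    · have e : a / c * c = a := by field_simp
      refine ⟨a / c, by positivity, ?_, ?_⟩
      · rw [smul_smul, e]; exact h1
      · rw [smul_smul, e]; exact h2

theorem mem_dirSub (K : Set V) (hK : Convex ℝ K) (σ : V) (hσ : σ ∈ K) (v : V) :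
    v ∈ dirSub K hK σ hσ ↔ ∃ ε : ℝ, 0 < ε ∧ σ + ε • v ∈ K ∧ σ - ε • v ∈ K := Iff.rfl

/-- The face of `K` generated by `σ`. -/
def dirFace (K : Set V) (hK : Convex ℝ K) (σ : V) (hσ : σ ∈ K) : Set V :=
  {y | y ∈ K ∧ y - σ ∈ dirSub K hK σ hσ}

/-- Two points of `K` between which `σ` lies strictly give directions in `dirSub`. -/
theorem sub_mem_dirSub (K : Set V) (hK : Convex ℝ K) (σ : V) (hσ : σ ∈ K) (y z : V)
    (hy : y ∈ K) (hz : z ∈ K) (t : ℝ) (ht : t ∈ Set.Ioo (0:ℝ) 1)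
    (h : σ = (1 - t) • y + t • z) : y - σ ∈ dirSub K hK σ hσ := by
  obtain ⟨t0, t1⟩ := ht
  have t2 : 0 < 1 - t := by linarith
  refine (Submodule.smul_mem_iff _ (s := t⁻¹) (by positivity)).1 ?_
  have : t⁻¹ • (y - σ) = y - z := by
    rw [h]; match_scalars <;> field_simp <;> ring
  rw [this]
  refine ⟨t * (1 - t), by positivity, ?_, ?_⟩
  · have := hK hy hz (a := (1 - t) + t * (1 - t)) (b := t - t * (1 - t)) (by positivity)
      (by nlinarith) (by ring)
    convert this using 1
    rw [h]; module
  · have := hK hy hz (a := (1 - t) - t * (1 - t)) (b := t + t * (1 - t)) (by nlinarith)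
      (by positivity) (by ring)
    convert this using 1
    rw [h]; module

theorem exists_dirFace_between (K : Set V) (hK : Convex ℝ K) (σ : V) (hσ : σ ∈ K) (y : V)
    (hy : y ∈ dirFace K hK σ hσ) :
    ∃ z ∈ K, ∃ t : ℝ, t ∈ Set.Ioo (0:ℝ) 1 ∧ σ = (1 - t) • y + t • z := by
  obtain ⟨hyK, ε, hε, -, h2⟩ := hy
  refine ⟨_, h2, 1 / (1 + ε), ⟨by positivity, ?_⟩, ?_⟩
  · rw [div_lt_one (by positivity)]; linarith
  · match_scalars <;> field_simp <;> ring

theorem dirFace_convex (K : Set V) (hK : Convex ℝ K) (σ : V) (hσ : σ ∈ K) :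
    Convex ℝ (dirFace K hK σ hσ) := by
  rintro y ⟨hy, hy'⟩ z ⟨hz, hz'⟩ a b ha hb hab
  refine ⟨hK hy hz ha hb hab, ?_⟩
  have : a • y + b • z - σ = a • (y - σ) + b • (z - σ) := by
    obtain rfl : a = 1 - b := by linarith
    module
  rw [this]
  exact add_mem (Submodule.smul_mem _ _ hy') (Submodule.smul_mem _ _ hz')

theorem dirFace_isFace (K : Set V) (hK : Convex ℝ K) (σ : V) (hσ : σ ∈ K) :
    IsFaceOf K (dirFace K hK σ hσ) := by
  refine ⟨dirFace_convex K hK σ hσ, fun y hy => hy.1, ?_⟩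
  have key : ∀ x ∈ dirFace K hK σ hσ, ∀ y ∈ K, ∀ z ∈ K, ∀ l : ℝ, l ∈ Set.Ioo (0:ℝ) 1 →
      x = (1 - l) • y + l • z → y ∈ dirFace K hK σ hσ := by
    rintro x hx y hy z hz l ⟨l0, l1⟩ rfl
    obtain ⟨w, hw, t, ⟨t0, t1⟩, h⟩ := exists_dirFace_between K hK σ hσ _ hx
    refine ⟨hy, ?_⟩
    set a := (1 - t) * (1 - l) with ha
    have ht' : 0 < 1 - t := by linarith
    have hl' : 0 < 1 - l := by linarith
    have a0 : 0 < a := by positivity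
    have a1 : 0 < 1 - a := by
      have : 1 - a = t + (1 - t) * l := by rw [ha]; ring
      rw [this]; positivity
    have hm := hK hz hw (a := (1 - t) * l / (1 - a)) (b := t / (1 - a)) (by positivity)
      (by positivity) (by rw [← add_div, div_eq_one_iff_eq a1.ne']; rw [ha]; ring)
    refine sub_mem_dirSub K hK σ hσ y _ hy hm (1 - a) ⟨a1, by linarith⟩ ?_
    have e1 : (1 - a) * ((1 - t) * l / (1 - a)) = (1 - t) * l := by field_simp
    have e2 : (1 - a) * (t / (1 - a)) = t := by field_simp
    rw [h, smul_add (1 - a), smul_smul (1 - a), smul_smul (1 - a), e1, e2, ha]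
    module
  intro x hx y hy z hz l hl h
  refine ⟨key x hx y hy z hz l hl h, key x hx z hz y hy (1 - l) ⟨?_, ?_⟩ ?_⟩
  · linarith [hl.2]
  · linarith [hl.1]
  · rw [h]; module

theorem self_mem_dirFace (K : Set V) (hK : Convex ℝ K) (σ : V) (hσ : σ ∈ K) :
    σ ∈ dirFace K hK σ hσ := ⟨hσ, by simp⟩

theorem dirFace_vectorSpan (K : Set V) (hK : Convex ℝ K) (σ : V) (hσ : σ ∈ K) :
    vectorSpan ℝ (dirFace K hK σ hσ) = dirSub K hK σ hσ := by
  apply le_antisymm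
  · rw [vectorSpan_def, Submodule.span_le]
    rintro _ ⟨y, hy, z, hz, rfl⟩
    have : y - z = (y - σ) - (z - σ) := by abel
    simp only [vsub_eq_sub, SetLike.mem_coe]
    rw [this]
    exact sub_mem hy.2 hz.2
  · intro v hv
    obtain ⟨ε, hε, h1, h2⟩ := id hv
    refine (Submodule.smul_mem_iff _ (s := ε) hε.ne').1 ?_
    have hm : σ + ε • v ∈ dirFace K hK σ hσ :=
      ⟨h1, by simpa using Submodule.smul_mem _ ε hv⟩
    have := vsub_mem_vectorSpan ℝ hm (self_mem_dirFace K hK σ hσ)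
    simpa using this

/-- A real affine function on `F` is, around an algebraically interior point, given by
a linear functional. -/
theorem exists_linear (F : Set V) (hF : Convex ℝ F) (σ : V) (hσ : σ ∈ F) (W : Submodule ℝ V)
    (hW : ∀ v ∈ W, ∃ ε : ℝ, 0 < ε ∧ σ + ε • v ∈ F) (g : V → ℝ)
    (hg : ∀ y ∈ F, ∀ z ∈ F, ∀ t : ℝ, t ∈ Set.Icc (0:ℝ) 1 →
      g ((1 - t) • y + t • z) = (1 - t) * g y + t * g z) :
    ∃ L : W →ₗ[ℝ] ℝ, ∀ v : W, ∀ a : ℝ, 0 < a → σ + a • (v : V) ∈ F →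
      g (σ + a • (v : V)) - g σ = a * L v := by
  have shrink : ∀ v : V, ∀ a b : ℝ, 0 < a → a ≤ b → σ + b • v ∈ F →
      σ + a • v ∈ F ∧ b * (g (σ + a • v) - g σ) = a * (g (σ + b • v) - g σ) := by
    intro v a b ha hab hb
    have hb0 : 0 < b := by linarith
    have ht : a / b ∈ Set.Icc (0:ℝ) 1 := ⟨by positivity, (div_le_one hb0).2 hab⟩
    have e : σ + a • v = (1 - a / b) • σ + (a / b) • (σ + b • v) := by
      match_scalars <;> field_simp <;> ring
    constructor
    · rw [e]; exact hF hσ hb (by linarith [ht.2]) ht.1 (by ring)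
    · rw [e, hg σ hσ _ hb _ ht]; field_simp; ring
  have hex : ∀ v : W, ∃ c : ℝ, ∀ a : ℝ, 0 < a → σ + a • (v : V) ∈ F →
      g (σ + a • (v : V)) - g σ = a * c := by
    intro v
    obtain ⟨ε, hε, h⟩ := hW v v.2
    refine ⟨(g (σ + ε • (v : V)) - g σ) / ε, fun a ha h' => ?_⟩
    rcases le_total a ε with hl | hl
    · have := (shrink v a ε ha hl h).2
      field_simp; linarith
    · have := (shrink v ε a hε hl h').2
      field_simp; linarith
  choose h hh using hex
  have hadd : ∀ v w : W, h (v + w) = h v + h w := by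
    intro v w
    obtain ⟨a, ha, h1⟩ := hW v v.2
    obtain ⟨b, hb, h2⟩ := hW w w.2
    set c := min a b with hc
    have c0 : 0 < c := lt_min ha hb
    have m1 := (shrink v c a c0 (min_le_left _ _) h1).1
    have m2 := (shrink w c b c0 (min_le_right _ _) h2).1
    have e : σ + (c / 2) • ((v + w : W) : V) =
        (1 - (1 / 2 : ℝ)) • (σ + c • (v : V)) + (1 / 2 : ℝ) • (σ + c • (w : V)) := by
      push_cast; module
    have m3 : σ + (c / 2) • ((v + w : W) : V) ∈ F := by
      rw [e]; exact hF m1 m2 (by norm_num) (by norm_num) (by norm_num)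
    have q1 := hh v c c0 m1
    have q2 := hh w c c0 m2
    have q3 := hh (v + w) (c / 2) (by positivity) m3
    rw [e, hg _ m1 _ m2 _ ⟨by norm_num, by norm_num⟩] at q3
    have : c * h (v + w) = c * (h v + h w) := by linarith
    exact mul_left_cancel₀ c0.ne' this
  have h0 : h 0 = 0 := by
    have := hadd 0 0
    simp only [add_zero] at this
    linarith
  have hneg : ∀ v : W, h (-v) = - h v := by
    intro v
    have := hadd v (-v)
    rw [add_neg_cancel, h0] at this
    linarith
  have hpos : ∀ (c : ℝ) (v : W), 0 < c → h (c • v) = c * h v := by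
    intro c v hc
    obtain ⟨a, ha, h1⟩ := hW (c • v : W) (c • v : W).2
    have q1 := hh (c • v) a ha h1
    have e : σ + a • ((c • v : W) : V) = σ + (a * c) • (v : V) := by
      push_cast; module
    rw [e] at q1 h1
    have q2 := hh v (a * c) (by positivity) h1
    have : a * h (c • v) = a * (c * h v) := by linarith
    exact mul_left_cancel₀ ha.ne' this
  refine ⟨{ toFun := h, map_add' := hadd, map_smul' := ?_ }, hh⟩
  intro c v
  simp only [RingHom.id_apply, smul_eq_mul]
  rcases lt_trichotomy c 0 with hc | rfl | hc
  · have e : c • v = -((-c) • v) := by module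
    rw [e, hneg, hpos _ _ (by linarith)]; ring
  · simp [h0]
  · exact hpos c v hc

theorem exists_ker (W : Submodule ℝ V) (ℓ : ℕ) (L : Fin ℓ → (W →ₗ[ℝ] ℝ)) (hne : W ≠ ⊥)
    (hr : ∀ d : ℕ, 1 ≤ d → d ≤ ℓ → Module.rank ℝ W ≠ (d : Cardinal)) :
    ∃ v : W, v ≠ 0 ∧ ∀ k, L k v = 0 := by
  by_contra hcon
  push Not at hcon
  have hinj : Function.Injective (LinearMap.pi L) := by
    rw [← LinearMap.ker_eq_bot, LinearMap.ker_eq_bot']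
    intro v hv
    by_contra h
    obtain ⟨k, hk⟩ := hcon v h
    exact hk (congrFun hv k)
  have hfin : Module.Finite ℝ W := Module.Finite.of_injective _ hinj
  have hle := LinearMap.finrank_le_finrank_of_injective hinj
  rw [Module.finrank_fin_fun] at hle
  have : Nontrivial W := (Submodule.nontrivial_iff_ne_bot).2 hne
  exact hr _ Module.finrank_pos hle (Module.finrank_eq_rank ℝ W).symm

theorem genAffine_ne_top (C : Set V) (f : V → EReal) (hf : IsGenAffine C f) (y z : V)
    (hy : y ∈ C) (hz : z ∈ C) (t : ℝ) (ht : t ∈ Set.Ioo (0:ℝ) 1)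
    (h : f ((1 - t) • y + t • z) ≠ ⊤) : f y ≠ ⊤ := by
  intro hT
  apply h
  rw [hf.2 y hy z hz t ⟨ht.1.le, ht.2.le⟩, hT,
    EReal.coe_mul_top_of_pos (by linarith [ht.2])]
  apply EReal.top_add_of_ne_bot
  have hb := hf.1 z hz
  induction hzz : f z with
  | bot => exact absurd hzz hb
  | top => rw [EReal.coe_mul_top_of_pos ht.1]; simp
  | coe r => rw [← EReal.coe_mul]; exact EReal.coe_ne_bot _

theorem stmt16 (K : Set V) (hK : Convex ℝ K) (hne : K.Nonempty)
    (o : V) (ho : o ∉ affineSpan ℝ K) (ℓ : ℕ)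
    (f : Fin ℓ → V → EReal) (hf : ∀ k, IsGenAffine (pyr K o) (f k))
    (α : Fin ℓ → ℝ) (s : Set (Fin ℓ))
    (hKfaces : ∀ F : Set V, IsFaceOf K F → ∀ d : ℕ, 1 ≤ d → d ≤ ℓ →
      Module.rank ℝ ↥(vectorSpan ℝ F) ≠ (d : Cardinal)) :
    ∀ x : V,
      IsExtremePoint {y ∈ pyr K o | (∀ k ∉ s, f k y ≤ (α k : EReal)) ∧
                                    (∀ k ∈ s, f k y = (α k : EReal))} x →
      x = o ∨ ∃ σ : V, IsExtremePoint K σ ∧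
        ∃ l : ℝ, l ∈ Set.Icc (0:ℝ) 1 ∧ x = (1 - l) • σ + l • o := by
  intro x hx
  have hxm := hx.1 rfl
  obtain ⟨hxp, hx1, hx2⟩ := hxm
  rcases hxp with hxo | hxp
  · exact Or.inl hxo
  simp only [Set.mem_iUnion] at hxp
  obtain ⟨σ, hσ, a, l, ha, hl, hal, hxe⟩ := hxp
  obtain rfl : a = 1 - l := by linarith
  rcases ha.eq_or_lt with ha0 | ha0
  · left
    obtain rfl : l = 1 := by linarith
    rw [← hxe]; simp
  right
  refine ⟨σ, ?_, l, ⟨hl, by linarith⟩, hxe.symm⟩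
  by_contra hσe
  let W := dirSub K hK σ hσ
  let F := dirFace K hK σ hσ
  let τ : V → V := fun y => (1 - l) • y + l • o
  have hτp : ∀ y ∈ K, τ y ∈ pyr K o := by
    intro y hy
    right
    simp only [Set.mem_iUnion]
    exact ⟨y, hy, 1 - l, l, ha, hl, hal, rfl⟩
  have hτc : ∀ y z : V, ∀ t : ℝ, τ ((1 - t) • y + t • z) = (1 - t) • τ y + t • τ z := by
    intro y z t; simp only [τ]; module
  have hτσ : τ σ = x := hxe
  have hWne : W ≠ ⊥ := by
    intro hbot
    apply hσe
    have key : ∀ y ∈ K, ∀ z ∈ K, ∀ t : ℝ, t ∈ Set.Ioo (0:ℝ) 1 →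
        σ = (1 - t) • y + t • z → y = σ := by
      intro y hy z hz t ht h
      have : y - σ ∈ W := sub_mem_dirSub K hK σ hσ y z hy hz t ht h
      rw [hbot, Submodule.mem_bot] at this
      exact sub_eq_zero.1 this
    refine ⟨by simpa using hσ, ?_⟩
    rintro _ rfl y hy z hz t ht h
    refine ⟨key y hy z hz t ht h, key z hz y hy (1 - t) ⟨?_, ?_⟩ ?_⟩
    · linarith [ht.2]
    · linarith [ht.1]
    · nth_rewrite 1 [h]; module
  have hfx : ∀ k, f k x ≠ ⊤ := by
    intro k
    have : f k x ≤ (α k : EReal) := by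
      by_cases hk : k ∈ s
      · exact (hx2 k hk).le
      · exact hx1 k hk
    exact ne_top_of_le_ne_top (EReal.coe_ne_top _) this
  have hfF : ∀ k, ∀ y ∈ F, f k (τ y) ≠ ⊤ ∧ f k (τ y) ≠ ⊥ := by
    intro k y hy
    refine ⟨?_, (hf k).1 _ (hτp y hy.1)⟩
    obtain ⟨z, hz, t, ht, h⟩ := exists_dirFace_between K hK σ hσ y hy
    refine genAffine_ne_top _ _ (hf k) (τ y) (τ z) (hτp y hy.1) (hτp z hz) t ht ?_
    rw [← hτc, ← h, hτσ]
    exact hfx k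
  have hWF : ∀ v ∈ W, ∃ ε : ℝ, 0 < ε ∧ σ + ε • v ∈ F := by
    intro v hv
    obtain ⟨ε, hε, h1, h2⟩ := id hv
    exact ⟨ε, hε, h1, by simpa using Submodule.smul_mem _ ε hv⟩
  have hlin := fun k => exists_linear F (dirFace_convex K hK σ hσ) σ
    (self_mem_dirFace K hK σ hσ) W hWF (fun y => (f k (τ y)).toReal) (by
      intro y hy z hz t ht
      have h := (hf k).2 (τ y) (hτp y hy.1) (τ z) (hτp z hz.1) t ht
      obtain ⟨y1, y2⟩ := hfF k y hy
      obtain ⟨z1, z2⟩ := hfF k z hz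
      rw [hτc, h]
      lift f k (τ y) to ℝ using ⟨y1, y2⟩ with r
      lift f k (τ z) to ℝ using ⟨z1, z2⟩ with q
      rw [← EReal.coe_mul, ← EReal.coe_mul, ← EReal.coe_add, EReal.toReal_coe, EReal.toReal_coe, EReal.toReal_coe])
  choose L hL using hlin
  obtain ⟨v, hv0, hv⟩ := exists_ker W ℓ L hWne (by
    have := hKfaces F (dirFace_isFace K hK σ hσ)
    rw [dirFace_vectorSpan] at this
    exact this)
  have hmem : ∀ (w : W) (a : ℝ), 0 < a → σ + a • (w : V) ∈ K → (∀ k, L k w = 0) →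
      τ (σ + a • (w : V)) ∈ {y ∈ pyr K o | (∀ k ∉ s, f k y ≤ (α k : EReal)) ∧
                                    (∀ k ∈ s, f k y = (α k : EReal))} := by
    intro w a ha hw hLw
    have hwF : σ + a • (w : V) ∈ F := ⟨hw, by simpa using Submodule.smul_mem _ a w.2⟩
    have heq : ∀ k, f k (τ (σ + a • (w : V))) = f k x := by
      intro k
      have h := hL k w a ha hwF
      rw [hLw k, mul_zero, sub_eq_zero, hτσ] at h
      obtain ⟨p, q⟩ := hfF k _ hwF
      obtain ⟨p', q'⟩ := hfF k _ (self_mem_dirFace K hK σ hσ)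
      rw [hτσ] at p' q'
      exact (EReal.toReal_eq_toReal p q p' q').1 h
    refine ⟨hτp _ hw, fun k hk => ?_, fun k hk => ?_⟩
    · rw [heq]; exact hx1 k hk
    · rw [heq]; exact hx2 k hk
  obtain ⟨ε, hε, h1, h2⟩ := id v.2
  have m1 := hmem v ε hε h1 hv
  have m2 := hmem (-v) ε hε (by simpa [sub_eq_add_neg] using h2) (by simpa using hv)
  have := (hx.2 x rfl _ m1 _ m2 (1 / 2) ⟨by norm_num, by norm_num⟩ (by
    rw [← hτc, ← hτσ]; congr 1; push_cast; module)).1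
  rw [Set.mem_singleton_iff, ← hτσ] at this
  have h3 : ((1 - l) * ε) • (v : V) = 0 := by
    have h4 : τ (σ + ε • (v : V)) - τ σ = ((1 - l) * ε) • (v : V) := by
      simp only [τ]; module
    rw [← h4, this, sub_self]
  rcases smul_eq_zero.1 h3 with h | h
  · exact (mul_pos ha0 hε).ne' h
  · exact hv0 (by exact_mod_cast h)
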